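/- Let d = 2^n, σ > 0, and x, y ∈ ℝ^d with z = ‖x−y‖/σ. Let D_1, D_2, D_3 be independent random sign diagonal matrices, let H be the normalized Walsh–Hadamard matrix, and define the Structured Orthogonal Random Features kernel estimate K_SORF(x,y) = (1/d)·Σ_{i=1}^d cos(w_iᵀ(x−y)/σ), where w_1,…,w_d are the rows of √d·H·D_1·H·D_2·H·D_3. Then |E[K_SORF(x,y)] − e^{-z²/2}| ≤ 6z/√d. -/

import Mathlib

open MeasureTheory ProbabilityTheory Real

/-- The Rademacher distribution on `ℝ`: `±1` each with probability `1/2`. -/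
noncomputable def rademacher : Measure ℝ :=
  (2 : ENNReal)⁻¹ • Measure.dirac 1 + (2 : ENNReal)⁻¹ • Measure.dirac (-1)

/-- The normalized Walsh–Hadamard matrix of size `2^n`: entry `(i,j)` is
`(−1)^{⟨i,j⟩}/√(2^n)` where `⟨i,j⟩` is the inner product of the binary representations of
the (0-indexed) `i` and `j`. -/
noncomputable def hadamardMatrix (n : ℕ) : Matrix (Fin (2 ^ n)) (Fin (2 ^ n)) ℝ :=
  Matrix.of fun i j =>
    (-1 : ℝ) ^ (∑ k : Fin n, ((i : ℕ).testBit k).toNat * ((j : ℕ).testBit k).toNat) /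
      Real.sqrt (2 ^ n)

lemma sin_sq_lower (t : ℝ) : t ^ 2 - t ^ 4 / 3 ≤ Real.sin t ^ 2 := by
  wlog ht : 0 ≤ t generalizing t
  · have := this (-t) (by linarith)
    simpa [Real.sin_neg, Even.neg_pow (by decide : Even 4)] using this
  have h := Real.sin_ge_sub_cube ht
  by_cases h6 : t ^ 2 ≤ 6
  · have h0 : 0 ≤ t - t ^ 3 / 6 := by nlinarith
    have := pow_le_pow_left₀ h0 h 2
    nlinarith [sq_nonneg (t ^ 3)]
  · push Not at h6
    nlinarith [sq_nonneg (Real.sin t), sq_nonneg t]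

lemma exp_neg_upper {s : ℝ} (hs : 0 ≤ s) : Real.exp (-s) ≤ 1 - s + s ^ 2 / 2 := by
  have h := Real.quadratic_le_exp_of_nonneg hs
  rw [Real.exp_neg, inv_le_iff_one_le_mul₀ (Real.exp_pos s)]
  have h1 : 0 ≤ 1 - s + s ^ 2 / 2 := by nlinarith [sq_nonneg (s - 1)]
  have h2 := mul_le_mul_of_nonneg_left h h1
  nlinarith [sq_nonneg (s ^ 2)]

lemma cos_sub_exp (t : ℝ) : |Real.cos t - Real.exp (-(t ^ 2 / 2))| ≤ t ^ 4 / 8 := by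
  have h1 := exp_neg_upper (s := t ^ 2 / 2) (by positivity)
  have h2 := Real.one_sub_sq_div_two_le_cos (x := t)
  have h3 := Real.add_one_le_exp (-(t ^ 2 / 2))
  have h4 := sin_sq_lower (t / 2)
  have h5 : Real.cos t = 1 - 2 * Real.sin (t / 2) ^ 2 := by
    have := Real.cos_two_mul (t / 2)
    rw [mul_div_cancel₀ t (by norm_num : (2 : ℝ) ≠ 0)] at this
    rw [this, Real.cos_sq']; ring
  have h6 : 0 ≤ t ^ 4 := by positivity
  rw [abs_le]
  constructor
  · nlinarith
  · nlinarith

lemma abs_cos_upper (t : ℝ) : |Real.cos t| ≤ Real.exp (-(t ^ 2 / 2 - t ^ 4 / 6)) := by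
  refine abs_le_of_sq_le_sq ?_ (Real.exp_pos _).le
  rw [← Real.exp_nat_mul, Real.cos_sq']
  have := Real.add_one_le_exp ((2 : ℕ) * (-(t ^ 2 / 2 - t ^ 4 / 6)))
  have h := sin_sq_lower t
  push_cast at *
  linarith

lemma prod_sub_prod_abs {ι : Type*} (s : Finset ι) (a b : ι → ℝ) (ha : ∀ i, |a i| ≤ 1)
    (hb : ∀ i, |b i| ≤ 1) : |∏ i ∈ s, a i - ∏ i ∈ s, b i| ≤ ∑ i ∈ s, |a i - b i| := by
  classical
  induction s using Finset.induction_on with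
  | empty => simp
  | insert i s hi ih =>
    rw [Finset.prod_insert hi, Finset.prod_insert hi, Finset.sum_insert hi]
    have e : a i * ∏ i ∈ s, a i - b i * ∏ i ∈ s, b i
      = (a i - b i) * ∏ i ∈ s, a i + b i * (∏ i ∈ s, a i - ∏ i ∈ s, b i) := by ring
    rw [e]
    refine (abs_add_le _ _).trans ?_
    rw [abs_mul, abs_mul]
    have hp : |∏ i ∈ s, a i| ≤ 1 := by
      rw [Finset.abs_prod]
      exact Finset.prod_le_one (fun _ _ => abs_nonneg _) (fun i _ => ha i)
    exact add_le_add (mul_le_of_le_one_right (abs_nonneg _) hp)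
      ((mul_le_of_le_one_left (abs_nonneg _) (hb i)).trans ih)

section pointwise
variable {ι : Type*} [Fintype ι] (t : ι → ℝ)

lemma pw1 : |∏ i, Real.cos (t i) - Real.exp (-(∑ i, t i ^ 2) / 2)| ≤ (∑ i, t i ^ 4) / 8 := by
  have : Real.exp (-(∑ i, t i ^ 2) / 2) = ∏ i, Real.exp (-(t i ^ 2 / 2)) := by
    rw [← Real.exp_sum, Finset.sum_neg_distrib, ← Finset.sum_div, neg_div]
  rw [this, Finset.sum_div]
  refine (prod_sub_prod_abs _ _ _ (fun i => Real.abs_cos_le_one _) (fun i => ?_)).trans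
    (Finset.sum_le_sum fun i _ => cos_sub_exp _)
  rw [abs_of_pos (Real.exp_pos _), Real.exp_le_one_iff]
  have := sq_nonneg (t i)
  linarith

lemma pw2 (hZ : 0 < ∑ i, t i ^ 2) :
    |∏ i, Real.cos (t i) - Real.exp (-(∑ i, t i ^ 2) / 2)|
      ≤ 6 / (∑ i, t i ^ 2) + (∑ i, t i ^ 4) / (∑ i, t i ^ 2) := by
  have hS : 0 ≤ ∑ i, t i ^ 4 := Finset.sum_nonneg fun i _ => by positivity
  have hP : |∏ i, Real.cos (t i)| ≤ Real.exp (-((∑ i, t i ^ 2) / 2 - (∑ i, t i ^ 4) / 6)) := by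
    rw [Finset.abs_prod, Finset.sum_div, Finset.sum_div, ← Finset.sum_sub_distrib,
      ← Finset.sum_neg_distrib, Real.exp_sum]
    exact Finset.prod_le_prod (fun _ _ => abs_nonneg _) fun i _ => abs_cos_upper _
  have hP1 : |∏ i, Real.cos (t i)| ≤ 1 := by
    rw [Finset.abs_prod]
    exact Finset.prod_le_one (fun _ _ => abs_nonneg _) fun i _ => Real.abs_cos_le_one _
  generalize ∑ i, t i ^ 2 = Z at *
  generalize ∑ i, t i ^ 4 = S at *
  generalize ∏ i, Real.cos (t i) = P at *
  have hinv : ∀ s : ℝ, 0 < s → Real.exp (-s) ≤ 1 / s := by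
    intro s hs
    rw [Real.exp_neg, ← one_div]
    exact one_div_le_one_div_of_le hs (by linarith [Real.add_one_le_exp s])
  have h2 : Real.exp (-Z / 2) ≤ 2 / Z := by
    have := hinv (Z / 2) (by positivity)
    rw [neg_div]; refine this.trans (le_of_eq (by field_simp))
  have h3 : |P| ≤ 4 / Z + S / Z := by
    by_cases h : S ≤ Z
    · have : |P| ≤ Real.exp (-(Z / 4)) := hP.trans (Real.exp_le_exp.mpr (by linarith))
      have h4 := hinv (Z / 4) (by positivity)
      have h5 : 1 / (Z / 4) = 4 / Z := by field_simp
      have : 0 ≤ S / Z := by positivity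
      linarith
    · have : 1 ≤ S / Z := by rw [le_div_iff₀ hZ]; linarith
      have : 0 ≤ 4 / Z := by positivity
      linarith
  have h6 : 6 / Z = 4 / Z + 2 / Z := by ring
  have := abs_sub P (Real.exp (-Z / 2))
  rw [abs_of_pos (Real.exp_pos (-Z / 2))] at this
  linarith

lemma pw3 : |∏ i, Real.cos (t i) - Real.exp (-(∑ i, t i ^ 2) / 2)| ≤ 2 := by
  have hP1 : |∏ i, Real.cos (t i)| ≤ 1 := by
    rw [Finset.abs_prod]
    exact Finset.prod_le_one (fun _ _ => abs_nonneg _) fun i _ => Real.abs_cos_le_one _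
  have hS : 0 ≤ ∑ i, t i ^ 2 := Finset.sum_nonneg fun i _ => by positivity
  have h1 : Real.exp (-(∑ i, t i ^ 2) / 2) ≤ 1 := by
    rw [Real.exp_le_one_iff]; linarith
  have := abs_sub (∏ i, Real.cos (t i)) (Real.exp (-(∑ i, t i ^ 2) / 2))
  rw [abs_of_pos (Real.exp_pos (-(∑ i, t i ^ 2) / 2))] at this
  linarith

end pointwise

/-- final numeric combination -/
lemma combine {z q E S : ℝ} (hz : 0 ≤ z) (hq : 0 < q) (hS : S ≤ 12 * z ^ 4 / q ^ 2)
    (h1 : E ≤ S / 8) (h2 : 0 < z → E ≤ 6 / z ^ 2 + S / z ^ 2) (h3 : E ≤ 2) :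
    E ≤ 6 * z / q := by
  rcases hz.eq_or_lt with rfl | hz
  · simp at hS ⊢; linarith
  have h2 := h2 hz
  by_cases hc : q ≤ 3 * z
  · refine h3.trans ?_
    rw [le_div_iff₀ hq]; linarith
  push Not at hc
  by_cases hd : z ^ 3 ≤ 4 * q
  · have : 12 * z ^ 4 / q ^ 2 / 8 ≤ 6 * z / q := by
      rw [div_div, div_le_div_iff₀ (by positivity) hq]
      have := mul_le_mul_of_nonneg_left hd (by positivity : 0 ≤ 12 * z * q)
      nlinarith
    linarith
  · push Not at hd
    have a1 : 6 / z ^ 2 ≤ 3 / 2 * (z / q) := by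
      rw [← mul_div_assoc, div_le_div_iff₀ (by positivity) hq]; nlinarith
    have a2 : S / z ^ 2 ≤ 4 * (z / q) := by
      refine (div_le_div_of_nonneg_right hS (by positivity)).trans ?_
      rw [← mul_div_assoc, div_div, div_le_div_iff₀ (by positivity) hq]
      have := mul_le_mul_of_nonneg_left hc.le (by positivity : 0 ≤ 4 * z ^ 3 * q)
      nlinarith
    have a3 : 6 * z / q = 6 * (z / q) := by ring
    have : 0 < z / q := by positivity
    linarith

lemma integral_rademacher {E : Type*} [NormedAddCommGroup E] [NormedSpace ℝ E] [CompleteSpace E]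
    (f : ℝ → E) :
    ∫ x, f x ∂rademacher = (2 : ℝ)⁻¹ • (f 1 + f (-1)) := by
  have h : ∀ a : ℝ, Integrable f ((2 : ENNReal)⁻¹ • Measure.dirac a) := fun a =>
    (integrable_dirac (by simp)).smul_measure (by simp)
  rw [rademacher, integral_add_measure (h _) (h _), integral_smul_measure, integral_smul_measure,
    integral_dirac, integral_dirac]
  simp

instance : IsProbabilityMeasure rademacher := by
  constructor
  simp [rademacher, ENNReal.inv_two_add_inv_two]

lemma rademacher_restrict : rademacher.restrict {1, -1} = rademacher := by
  rw [Measure.restrict_eq_self_of_ae_mem]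
  rw [rademacher, ae_add_measure_iff]
  constructor <;> refine Measure.ae_smul_measure ?_ _ <;> simp [ae_dirac_eq]

section
variable {ι : Type*} [Fintype ι]

/-- product of Rademacher measures -/
noncomputable abbrev radPi (ι : Type*) [Fintype ι] : Measure (ι → ℝ) :=
  Measure.pi fun _ : ι => rademacher

/-- sign vectors -/
abbrev signs (ι : Type*) : Set (ι → ℝ) := Set.pi Set.univ fun _ => {1, -1}

lemma signs_compact {ι : Type*} : IsCompact (signs ι) :=
  isCompact_univ_pi fun _ => (Set.toFinite _).isCompact

lemma radPi_restrict : (radPi ι).restrict (signs ι) = radPi ι := by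
  rw [radPi, Measure.restrict_pi_pi, rademacher_restrict]

lemma radPi_ae : ∀ᵐ ε ∂(radPi ι), ∀ i, ε i ^ 2 = 1 := by
  rw [← radPi_restrict]
  filter_upwards [ae_restrict_mem signs_compact.measurableSet] with ε h i
  have := h i (Set.mem_univ i)
  rcases this with h | h
  · rw [h]; norm_num
  · rw [Set.mem_singleton_iff.mp h]; norm_num

lemma radPi_integrable {E : Type*} [NormedAddCommGroup E] {f : (ι → ℝ) → E}
    (hf : Continuous f) : Integrable f (radPi ι) := by
  rw [← radPi_restrict]
  exact hf.continuousOn.integrableOn_compact signs_compact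

lemma radPi2_integrable {f : (ι → ℝ) × (ι → ℝ) → ℝ}
    (hf : Continuous f) : Integrable f ((radPi ι).prod (radPi ι)) := by
  rw [← radPi_restrict, Measure.prod_restrict]
  exact hf.continuousOn.integrableOn_compact (signs_compact.prod signs_compact)

lemma radPi3_integrable {f : (ι → ℝ) × ((ι → ℝ) × (ι → ℝ)) → ℝ}
    (hf : Continuous f) : Integrable f ((radPi ι).prod ((radPi ι).prod (radPi ι))) := by
  rw [← radPi_restrict, Measure.prod_restrict, Measure.prod_restrict]
  exact hf.continuousOn.integrableOn_compact
    (signs_compact.prod (signs_compact.prod signs_compact))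

lemma integral_cos_radPi (a : ι → ℝ) :
    ∫ ε, Real.cos (∑ j, a j * ε j) ∂(radPi ι) = ∏ j, Real.cos (a j) := by
  have h : ∫ ε : ι → ℝ, ∏ j, Complex.exp ((a j * ε j : ℝ) * Complex.I) ∂(radPi ι)
      = ((∏ j, Real.cos (a j) : ℝ) : ℂ) := by
    rw [radPi, integral_fintype_prod_eq_prod
      (f := fun j (x : ℝ) => Complex.exp ((a j * x : ℝ) * Complex.I))]
    push_cast
    refine Finset.prod_congr rfl fun j _ => ?_
    rw [integral_rademacher, Complex.cos]
    simp
    ring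
  have h2 := integral_re (𝕜 := ℂ) (radPi_integrable (ι := ι)
    (f := fun ε : ι → ℝ => ∏ j, Complex.exp ((a j * ε j : ℝ) * Complex.I)) (by fun_prop))
  rw [h] at h2
  simp only [RCLike.re_eq_complex_re, Complex.ofReal_re] at h2
  rw [← h2]
  congr 1
  ext ε
  rw [← Complex.exp_sum, ← Finset.sum_mul, ← Complex.ofReal_sum, Complex.exp_ofReal_mul_I_re]

lemma integral_expsum (a : ι → ℝ) :
    ∫ ε, Real.exp (∑ j, a j * ε j) ∂(radPi ι) ≤ Real.exp ((∑ j, a j ^ 2) / 2) := by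
  simp_rw [Real.exp_sum]
  rw [radPi, integral_fintype_prod_eq_prod (f := fun j (x : ℝ) => Real.exp (a j * x)),
    Finset.sum_div, Real.exp_sum]
  refine Finset.prod_le_prod (fun j _ => integral_nonneg fun _ => (Real.exp_pos _).le) fun j _ => ?_
  rw [integral_rademacher]
  refine le_trans (le_of_eq ?_) (Real.cosh_le_exp_half_sq (a j))
  rw [Real.cosh_eq]; simp; ring

lemma pow4_le_cosh (x : ℝ) : x ^ 4 / 24 ≤ Real.cosh x := by
  have := le_hasSum (Real.hasSum_cosh x) 2 (fun i _ => by rw [pow_mul]; positivity)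
  simpa [Nat.factorial] using this

lemma integral_pow4 (a : ι → ℝ) :
    ∫ ε, (∑ j, a j * ε j) ^ 4 ∂(radPi ι) ≤ 12 * (∑ j, a j ^ 2) ^ 2 := by
  have hA : 0 ≤ ∑ j, a j ^ 2 := Finset.sum_nonneg fun i _ => sq_nonneg _
  rcases hA.eq_or_lt with h0 | hA
  · have : ∀ j, a j = 0 := by
      intro j
      have := (Finset.sum_eq_zero_iff_of_nonneg (fun i _ => sq_nonneg (a i))).mp h0.symm j
        (Finset.mem_univ j)
      simpa using this
    simp [this]
  set A := ∑ j, a j ^ 2 with hAdef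
  set s := 2 / √A with hs
  have hs2 : s ^ 2 = 4 / A := by rw [hs, div_pow, Real.sq_sqrt hA.le]; norm_num
  have hsA : ∑ j, (s * a j) ^ 2 = 4 := by
    simp_rw [mul_pow]; rw [← Finset.mul_sum, hs2, ← hAdef]; field_simp
  have hsA' : ∑ j, (-s * a j) ^ 2 = 4 := by simpa using hsA
  have e1 := integral_expsum (fun j => s * a j)
  have e2 := integral_expsum (fun j => -s * a j)
  rw [hsA] at e1
  rw [hsA'] at e2
  have key : ∫ ε, (s ^ 4 / 24) * (∑ j, a j * ε j) ^ 4 ∂(radPi ι) ≤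
      ∫ ε, (Real.exp (∑ j, s * a j * ε j) + Real.exp (∑ j, -s * a j * ε j)) / 2 ∂(radPi ι) := by
    refine integral_mono (radPi_integrable (by fun_prop)) (radPi_integrable (by fun_prop)) ?_
    intro ε
    have := pow4_le_cosh (s * ∑ j, a j * ε j)
    rw [Real.cosh_eq] at this
    simp only [mul_assoc, ← Finset.mul_sum]
    rw [neg_mul]
    refine le_trans (le_of_eq (by ring)) this
  rw [integral_const_mul, integral_div, integral_add (radPi_integrable (by fun_prop))
    (radPi_integrable (by fun_prop))] at key
  have he : Real.exp (4 / 2) ≤ 8 := by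
    have h := Real.exp_one_lt_d9
    have : Real.exp (4 / 2) = Real.exp 1 ^ 2 := by rw [← Real.exp_nat_mul]; norm_num
    rw [this]; nlinarith [Real.exp_pos 1]
  have hs4 : s ^ 4 = 16 / A ^ 2 := by
    rw [show s ^ 4 = (s ^ 2) ^ 2 by ring, hs2, div_pow]; norm_num
  rw [hs4] at key
  have k2 : 16 / A ^ 2 / 24 * ∫ ε, (∑ j, a j * ε j) ^ 4 ∂(radPi ι) ≤ 8 := by linarith
  have k3 : ∫ ε, (∑ j, a j * ε j) ^ 4 ∂(radPi ι)
    = (16 / A ^ 2 / 24 * ∫ ε, (∑ j, a j * ε j) ^ 4 ∂(radPi ι)) * (3 / 2 * A ^ 2) := by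
    field_simp; ring
  rw [k3]
  have := mul_le_mul_of_nonneg_right k2 (by positivity : 0 ≤ 3 / 2 * A ^ 2)
  linarith

end

lemma had_sq (n : ℕ) (i j : Fin (2 ^ n)) : hadamardMatrix n i j ^ 2 = 1 / 2 ^ n := by
  simp only [hadamardMatrix, Matrix.of_apply]
  rw [div_pow, Real.sq_sqrt (by positivity), ← pow_mul, mul_comm, pow_mul]
  norm_num

lemma had_eq_prod (n : ℕ) (i j : Fin (2 ^ n)) : hadamardMatrix n i j =
    (∏ k : Fin n, (-1 : ℝ) ^ (((i : ℕ).testBit k).toNat * ((j : ℕ).testBit k).toNat)) /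
      Real.sqrt (2 ^ n) := by
  simp only [hadamardMatrix, Matrix.of_apply]
  rw [Finset.prod_pow_eq_pow_sum]

/-- flip bit `k` -/
def flipBit (n : ℕ) (k : Fin n) (i : Fin (2 ^ n)) : Fin (2 ^ n) :=
  ⟨(i : ℕ) ^^^ 2 ^ (k : ℕ), Nat.xor_lt_two_pow i.2 (Nat.pow_lt_pow_right (by norm_num) k.2)⟩

lemma flipBit_invol (n : ℕ) (k : Fin n) : Function.Involutive (flipBit n k) := by
  intro i
  ext
  simp [flipBit]

lemma had_flip (n : ℕ) (k : Fin n) (i j : Fin (2 ^ n)) :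
    hadamardMatrix n (flipBit n k i) j
      = (-1) ^ (((j : ℕ).testBit k).toNat) * hadamardMatrix n i j := by
  rw [had_eq_prod, had_eq_prod, ← mul_div_assoc]
  congr 1
  rw [← Finset.mul_prod_erase _ _ (Finset.mem_univ k), ← Finset.mul_prod_erase (a := k) _ _ (Finset.mem_univ k),
    ← mul_assoc]
  congr 1
  · simp only [flipBit, Nat.testBit_xor, Nat.testBit_two_pow_self]
    cases (i : ℕ).testBit k <;> cases (j : ℕ).testBit k <;> simp
  · refine Finset.prod_congr rfl fun l hl => ?_
    have : (k : ℕ) ≠ l := fun h => (Finset.ne_of_mem_erase hl) (Fin.ext h.symm)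
    simp [flipBit, Nat.testBit_xor, Nat.testBit_two_pow_of_ne this]

lemma had_gram (n : ℕ) (j j' : Fin (2 ^ n)) :
    ∑ i, hadamardMatrix n i j * hadamardMatrix n i j' = if j = j' then 1 else 0 := by
  split_ifs with h
  · subst h
    simp_rw [← sq, had_sq]
    simp
  · obtain ⟨k, hk⟩ : ∃ k : Fin n, (j : ℕ).testBit k ≠ (j' : ℕ).testBit k := by
      by_contra! hc
      apply h
      ext
      apply Nat.eq_of_testBit_eq
      intro k
      by_cases hk : k < n
      · exact hc ⟨k, hk⟩
      · have hp : 2 ^ n ≤ 2 ^ k := Nat.pow_le_pow_right (by norm_num) (not_lt.mp hk)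
        rw [Nat.testBit_lt_two_pow (j.2.trans_le hp), Nat.testBit_lt_two_pow (j'.2.trans_le hp)]
    have e := Equiv.sum_comp (flipBit_invol n k).toPerm
      (fun i => hadamardMatrix n i j * hadamardMatrix n i j')
    have e2 : ∀ i, hadamardMatrix n (flipBit n k i) j * hadamardMatrix n (flipBit n k i) j'
        = - (hadamardMatrix n i j * hadamardMatrix n i j') := by
      intro i
      rw [had_flip, had_flip]
      revert hk
      cases (j : ℕ).testBit k <;> cases (j' : ℕ).testBit k <;> simp
    simp only [Function.Involutive.coe_toPerm, e2, Finset.sum_neg_distrib] at e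
    linarith

lemma had_iso (n : ℕ) (v : Fin (2 ^ n) → ℝ) :
    ∑ i, (hadamardMatrix n).mulVec v i ^ 2 = ∑ i, v i ^ 2 := by
  have : ∀ i, (hadamardMatrix n).mulVec v i ^ 2 =
      ∑ j, ∑ j', v j * v j' * (hadamardMatrix n i j * hadamardMatrix n i j') := by
    intro i
    rw [sq, Matrix.mulVec, dotProduct, Finset.sum_mul_sum]
    refine Finset.sum_congr rfl fun j _ => Finset.sum_congr rfl fun j' _ => by ring
  simp_rw [this]
  rw [Finset.sum_comm]
  refine Finset.sum_congr rfl fun j _ => ?_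
  rw [Finset.sum_comm]
  simp_rw [← Finset.mul_sum, had_gram]
  simp [sq]

lemma cos_had (n : ℕ) (i j : Fin (2 ^ n)) (t : ℝ) :
    Real.cos (Real.sqrt (2 ^ n) * hadamardMatrix n i j * t) = Real.cos t := by
  have h : (Real.sqrt (2 ^ n) * hadamardMatrix n i j) ^ 2 = 1 := by
    rw [mul_pow, had_sq, Real.sq_sqrt (by positivity)]; field_simp
  rcases (sq_eq_sq_iff_eq_or_eq_neg.mp (h.trans (one_pow 2).symm)) with h | h <;> simp [h]

/-- one Hadamard-sign stage -/
noncomputable def stage (n : ℕ) (ε v : Fin (2 ^ n) → ℝ) : Fin (2 ^ n) → ℝ :=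
  (hadamardMatrix n).mulVec (fun k => ε k * v k)

lemma stage_cont (n : ℕ) : Continuous (fun p : (Fin (2 ^ n) → ℝ) × (Fin (2 ^ n) → ℝ) =>
    stage n p.1 p.2) := by
  unfold stage Matrix.mulVec dotProduct
  fun_prop

lemma stage_iso (n : ℕ) (ε v : Fin (2 ^ n) → ℝ) (h : ∀ i, ε i ^ 2 = 1) :
    ∑ i, stage n ε v i ^ 2 = ∑ i, v i ^ 2 := by
  rw [stage, had_iso]
  simp [mul_pow, h]

lemma row_eq (n : ℕ) (a b c v : Fin (2 ^ n) → ℝ) (i : Fin (2 ^ n)) :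
    (Real.sqrt (2 ^ n) • (hadamardMatrix n * Matrix.diagonal a * hadamardMatrix n *
      Matrix.diagonal b * hadamardMatrix n * Matrix.diagonal c)).mulVec v i
    = ∑ j, (Real.sqrt (2 ^ n) * hadamardMatrix n i j * stage n b (stage n c v) j) * a j := by
  have hd : ∀ a w : Fin (2 ^ n) → ℝ, (Matrix.diagonal a).mulVec w = fun k => a k * w k := by
    intro a w; ext k; simp [Matrix.mulVec_diagonal]
  rw [Matrix.smul_mulVec]
  simp only [← Matrix.mulVec_mulVec, hd]
  change Real.sqrt (2 ^ n) • (hadamardMatrix n).mulVec (fun k => a k * stage n b (stage n c v) k) i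
    = _
  rw [Matrix.mulVec, dotProduct, smul_eq_mul, Finset.mul_sum]
  exact Finset.sum_congr rfl fun j _ => by ring

lemma stage_pow4 (n : ℕ) (v : Fin (2 ^ n) → ℝ) :
    ∫ ε, ∑ j, stage n ε v j ^ 4 ∂(radPi (Fin (2 ^ n))) ≤ 12 * (∑ i, v i ^ 2) ^ 2 / 2 ^ n := by
  have hc : ∀ j, Continuous fun ε : Fin (2 ^ n) → ℝ => stage n ε v j ^ 4 := fun j =>
    ((continuous_apply j).comp ((stage_cont n).comp (by fun_prop :
      Continuous fun ε : Fin (2 ^ n) → ℝ => (ε, v)))).pow 4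
  rw [integral_finsetSum _ fun j _ => radPi_integrable (hc j)]
  have h : ∀ j, ∫ ε, stage n ε v j ^ 4 ∂(radPi (Fin (2 ^ n)))
      ≤ 12 * ((∑ i, v i ^ 2) / 2 ^ n) ^ 2 := by
    intro j
    have := integral_pow4 (fun k => hadamardMatrix n j k * v k)
    simp_rw [mul_pow, had_sq, ← Finset.mul_sum] at this
    refine le_trans (le_of_eq ?_) (this.trans (le_of_eq (by ring)))
    congr 1; ext ε
    rw [stage, Matrix.mulVec, dotProduct]
    congr 1
    exact Finset.sum_congr rfl fun k _ => by ring
  refine (Finset.sum_le_sum fun j _ => h j).trans (le_of_eq ?_)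
  simp
  field_simp

lemma stage_bound (n : ℕ) (v : Fin (2 ^ n) → ℝ) (z : ℝ) (hz : 0 ≤ z) (hv : ∑ i, v i ^ 2 = z ^ 2) :
    |∫ ε, ∏ j, Real.cos (stage n ε v j) ∂(radPi (Fin (2 ^ n))) - Real.exp (-z ^ 2 / 2)|
      ≤ 6 * z / Real.sqrt (2 ^ n) := by
  have hcs : ∀ j, Continuous fun ε : Fin (2 ^ n) → ℝ => stage n ε v j := fun j =>
    ((continuous_apply j).comp ((stage_cont n).comp (by fun_prop :
      Continuous fun ε : Fin (2 ^ n) → ℝ => (ε, v))))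
  have hi1 : Integrable (fun ε => ∏ j, Real.cos (stage n ε v j)) (radPi (Fin (2 ^ n))) :=
    radPi_integrable (by fun_prop)
  have hi2 : Integrable (fun ε => |∏ j, Real.cos (stage n ε v j) - Real.exp (-z ^ 2 / 2)|)
    (radPi (Fin (2 ^ n))) := radPi_integrable (by fun_prop)
  have hi3 : Integrable (fun ε => ∑ j, stage n ε v j ^ 4) (radPi (Fin (2 ^ n))) :=
    radPi_integrable (by fun_prop)
  have hae : ∀ᵐ ε ∂(radPi (Fin (2 ^ n))), ∑ j, stage n ε v j ^ 2 = z ^ 2 := by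
    filter_upwards [radPi_ae] with ε h
    rw [stage_iso n ε v h, hv]
  have h0 : |∫ ε, ∏ j, Real.cos (stage n ε v j) ∂(radPi (Fin (2 ^ n))) - Real.exp (-z ^ 2 / 2)|
      ≤ ∫ ε, |∏ j, Real.cos (stage n ε v j) - Real.exp (-z ^ 2 / 2)| ∂(radPi (Fin (2 ^ n))) := by
    have : ∫ ε, ∏ j, Real.cos (stage n ε v j) ∂(radPi (Fin (2 ^ n))) - Real.exp (-z ^ 2 / 2)
      = ∫ ε, (∏ j, Real.cos (stage n ε v j) - Real.exp (-z ^ 2 / 2)) ∂(radPi (Fin (2 ^ n))) := by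
      rw [integral_sub hi1 (integrable_const _)]; simp
    rw [this]
    exact abs_integral_le_integral_abs
  have hS := stage_pow4 n v
  rw [hv] at hS
  refine combine (S := ∫ ε, ∑ j, stage n ε v j ^ 4 ∂(radPi (Fin (2 ^ n)))) hz (by positivity)
    ?_ (h0.trans ?_) (fun hzp => h0.trans ?_) (h0.trans ?_)
  · rw [Real.sq_sqrt (by positivity)]
    exact hS.trans (le_of_eq (by ring))
  · rw [← integral_div]
    refine integral_mono_ae hi2 (hi3.div_const _) ?_
    filter_upwards [hae] with ε h
    rw [← h]
    exact pw1 _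
  · have e : 6 / z ^ 2 + (∫ ε, ∑ j, stage n ε v j ^ 4 ∂(radPi (Fin (2 ^ n)))) / z ^ 2
      = ∫ ε, (6 / z ^ 2 + (∑ j, stage n ε v j ^ 4) / z ^ 2) ∂(radPi (Fin (2 ^ n))) := by
      rw [integral_add (integrable_const _) (hi3.div_const _), ← integral_div]; simp
    rw [e]
    refine integral_mono_ae hi2 ((integrable_const _).add (hi3.div_const _)) ?_
    filter_upwards [hae] with ε h
    rw [← h]
    exact pw2 _ (by rw [h]; positivity)
  · have e : (2 : ℝ) = ∫ ε, (2 : ℝ) ∂(radPi (Fin (2 ^ n))) := by simp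
    refine le_trans ?_ e.symm.le
    refine integral_mono_ae hi2 (integrable_const _) ?_
    filter_upwards [hae] with ε h
    rw [← h]
    exact pw3 _

/-- for `d = 2^n`, `σ > 0`, `x, y ∈ ℝ^d` with `z = ‖x−y‖/σ`, and independent
random sign diagonal matrices `D₁, D₂, D₃`, the SORF kernel estimate
`K_SORF(x,y) = (1/d)·Σᵢ cos(wᵢᵀ(x−y)/σ)`, where `w₁,…,w_d` are the rows of
`√d·H·D₁·H·D₂·H·D₃`, satisfies `|E[K_SORF(x,y)] − e^{-z²/2}| ≤ 6z/√d`. -/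
theorem stmt_14 (n : ℕ) (σ : ℝ) (hσ : 0 < σ) (x y : EuclideanSpace ℝ (Fin (2 ^ n))) :
    |(∫ ε : (Fin (2 ^ n) → ℝ) × ((Fin (2 ^ n) → ℝ) × (Fin (2 ^ n) → ℝ)),
          (1 / (2 ^ n : ℝ)) * ∑ i : Fin (2 ^ n),
            Real.cos ((Real.sqrt (2 ^ n) •
                (hadamardMatrix n * Matrix.diagonal ε.1 * hadamardMatrix n *
                  Matrix.diagonal ε.2.1 * hadamardMatrix n *
                  Matrix.diagonal ε.2.2)).mulVec (σ⁻¹ • (x - y)) i)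
          ∂((Measure.pi fun _ : Fin (2 ^ n) => rademacher).prod
              ((Measure.pi fun _ : Fin (2 ^ n) => rademacher).prod
                (Measure.pi fun _ : Fin (2 ^ n) => rademacher))))
        - Real.exp (-(‖x - y‖ / σ) ^ 2 / 2)|
      ≤ 6 * (‖x - y‖ / σ) / Real.sqrt (2 ^ n) := by
  set v : Fin (2 ^ n) → ℝ := fun i => σ⁻¹ * (x i - y i) with hvdef
  have hv0 : σ⁻¹ • (x.ofLp - y.ofLp) = v := by ext i; simp [hvdef]
  have hz : 0 ≤ ‖x - y‖ / σ := by positivity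
  have hv : ∑ i, v i ^ 2 = (‖x - y‖ / σ) ^ 2 := by
    rw [div_pow, EuclideanSpace.norm_sq_eq, Finset.sum_div]
    refine Finset.sum_congr rfl fun i _ => ?_
    simp [hvdef]
    field_simp
  generalize ‖x - y‖ / σ = z at *
  have hst : ∀ j, Continuous fun p : (Fin (2 ^ n) → ℝ) × (Fin (2 ^ n) → ℝ) =>
      stage n p.1 (stage n p.2 v) j := fun j =>
    (continuous_apply j).comp ((stage_cont n).comp (continuous_fst.prodMk
      ((stage_cont n).comp (by fun_prop :
        Continuous fun p : (Fin (2 ^ n) → ℝ) × (Fin (2 ^ n) → ℝ) => (p.2, v)))))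
  have hst3 : ∀ j, Continuous fun p : (Fin (2 ^ n) → ℝ) × ((Fin (2 ^ n) → ℝ) × (Fin (2 ^ n) → ℝ)) =>
      stage n p.2.1 (stage n p.2.2 v) j := fun j => (hst j).comp continuous_snd
  simp only [WithLp.ofLp_smul, WithLp.ofLp_sub, hv0, row_eq]
  rw [integral_prod_symm _ (radPi3_integrable (by fun_prop))]
  have inner : ∀ p : (Fin (2 ^ n) → ℝ) × (Fin (2 ^ n) → ℝ),
      ∫ a, (1 / (2 ^ n : ℝ)) * ∑ i : Fin (2 ^ n), Real.cos (∑ j, (Real.sqrt (2 ^ n) *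
        hadamardMatrix n i j * stage n p.1 (stage n p.2 v) j) * a j) ∂(radPi (Fin (2 ^ n)))
      = ∏ j, Real.cos (stage n p.1 (stage n p.2 v) j) := by
    intro p
    rw [integral_const_mul, integral_finsetSum _ fun i _ => radPi_integrable (by fun_prop)]
    simp_rw [integral_cos_radPi, cos_had]
    simp
  simp only [inner]
  rw [integral_prod_symm _ (radPi2_integrable (by fun_prop))]
  have hG : Integrable (fun c => ∫ b, ∏ j, Real.cos (stage n b (stage n c v) j)
      ∂(radPi (Fin (2 ^ n)))) (radPi (Fin (2 ^ n))) :=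
    (radPi2_integrable (f := fun p => ∏ j, Real.cos (stage n p.1 (stage n p.2 v) j))
      (by fun_prop)).integral_prod_right
  have e : ∫ c, (∫ b, ∏ j, Real.cos (stage n b (stage n c v) j) ∂(radPi (Fin (2 ^ n))))
        ∂(radPi (Fin (2 ^ n))) - Real.exp (-z ^ 2 / 2)
      = ∫ c, ((∫ b, ∏ j, Real.cos (stage n b (stage n c v) j) ∂(radPi (Fin (2 ^ n))))
        - Real.exp (-z ^ 2 / 2)) ∂(radPi (Fin (2 ^ n))) := by
    rw [integral_sub hG (integrable_const _)]; simp
  rw [e, ← Real.norm_eq_abs]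
  refine (norm_integral_le_of_norm_le_const (C := 6 * z / Real.sqrt (2 ^ n)) ?_).trans (by simp)
  filter_upwards [radPi_ae] with c hc
  exact stage_bound n _ z hz (by rw [stage_iso n c v hc, hv])
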